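/- For every t in the set of types {11, 1211, 122, 211, 2122, 22}, there is no I(5, 4) admissible set in which every element is of type t. -/

import Mathlib

/-!
A vector whose support has size four in `Fin 5` is zero at exactly one coordinate, so an `I(5,4)`
set is a family `v 0, …, v 4` with `v i` vanishing exactly at `i`. Among three of these, no
coordinate carries two zeros, so the only way for `v i`, `v j`, `v k` not to clash is that the two
nonzero values at one of the coordinates `i`, `j`, `k` differ (`clash3_of_eq`). For each of the six
types there is a triple of omitted coordinates at which the type already forces the relevant values
to agree: `{0, 1, 2}` for `11` and `22`, `{1, 2, 3}` for `122` and `211`, and `{0, 3, 4}` for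
`1211` and `2122`. Hence those three members clash whatever the remaining entries are.
-/

/-- The support of a vector `v ∈ {0,1,2}^m`: the set of coordinates where `v` is nonzero. -/
def Supp {m : ℕ} (v : Fin m → Fin 3) : Finset (Fin m) :=
  Finset.univ.filter (fun i => v i ≠ 0)

/-- Exactly one of the three values `a`, `b`, `c` is nonzero. -/
def ExactlyOneNonzero (a b c : Fin 3) : Prop :=
  (a ≠ 0 ∧ b = 0 ∧ c = 0) ∨ (a = 0 ∧ b ≠ 0 ∧ c = 0) ∨ (a = 0 ∧ b = 0 ∧ c ≠ 0)

/-- Two vectors form a clash if the support of one is contained in the support of the other. -/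
def Clash2 {m : ℕ} (v₁ v₂ : Fin m → Fin 3) : Prop :=
  Supp v₁ ⊆ Supp v₂ ∨ Supp v₂ ⊆ Supp v₁

/-- Three vectors form a clash if there is no coordinate at which exactly one of them is
nonzero and no coordinate at which the three values are pairwise distinct. -/
def Clash3 {m : ℕ} (v₁ v₂ v₃ : Fin m → Fin 3) : Prop :=
  (¬ ∃ i, ExactlyOneNonzero (v₁ i) (v₂ i) (v₃ i)) ∧
  (¬ ∃ i, v₁ i ≠ v₂ i ∧ v₁ i ≠ v₃ i ∧ v₂ i ≠ v₃ i)

/-- A set of vectors is admissible if no two and no three of its elements form a clash. -/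
def IsAdmissible {m : ℕ} (A : Set (Fin m → Fin 3)) : Prop :=
  (∀ v₁ ∈ A, ∀ v₂ ∈ A, v₁ ≠ v₂ → ¬ Clash2 v₁ v₂) ∧
  (∀ v₁ ∈ A, ∀ v₂ ∈ A, ∀ v₃ ∈ A, v₁ ≠ v₂ → v₁ ≠ v₃ → v₂ ≠ v₃ → ¬ Clash3 v₁ v₂ v₃)

/-- `A` is an `I(m,w)` set: for every `w`-element subset `S` of `[m]` it contains exactly one
vector with support `S`, and it contains no other vectors. -/
def IsISet (m w : ℕ) (A : Set (Fin m → Fin 3)) : Prop :=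
  (∀ S : Finset (Fin m), S.card = w → ∃! v, v ∈ A ∧ Supp v = S) ∧
  (∀ v ∈ A, (Supp v).card = w)

/-- The list of nonzero values of `v`, read in increasing order of position. -/
def nonzeroValues {m : ℕ} (v : Fin m → Fin 3) : List (Fin 3) :=
  ((Supp v).sort (· ≤ ·)).map v

/-- `v` is of type `t` if `v` has at least `t.length` nonzero coordinates and the `i`-th
nonzero value of `v` (in increasing order of position) is `t i`, i.e. `t` is a prefix of the
list of nonzero values of `v`. -/
def IsOfType {m : ℕ} (v : Fin m → Fin 3) (t : List (Fin 3)) : Prop :=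
  t <+: nonzeroValues v

/-- `S₁, S₂, S₃` form a type `t` clash: whenever `v₁, v₂, v₃` have supports `S₁, S₂, S₃`
respectively and are all of type `t`, they form a clash. -/
def TypedClash {m : ℕ} (t : List (Fin 3)) (S₁ S₂ S₃ : Finset (Fin m)) : Prop :=
  ∀ v₁ v₂ v₃ : Fin m → Fin 3, Supp v₁ = S₁ → Supp v₂ = S₂ → Supp v₃ = S₃ →
    IsOfType v₁ t → IsOfType v₂ t → IsOfType v₃ t → Clash3 v₁ v₂ v₃

/-- Three vectors omitting distinct coordinates `i`, `j`, `k` clash as soon as, at each of these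
coordinates, the two that are nonzero there agree. -/
lemma clash3_of_eq {m : ℕ} {v₁ v₂ v₃ : Fin m → Fin 3} {i j k : Fin m}
    (hij : i ≠ j) (hik : i ≠ k) (hjk : j ≠ k)
    (h₁ : Supp v₁ = Finset.univ.erase i) (h₂ : Supp v₂ = Finset.univ.erase j)
    (h₃ : Supp v₃ = Finset.univ.erase k)
    (ei : v₂ i = v₃ i) (ej : v₁ j = v₃ j) (ek : v₁ k = v₂ k) : Clash3 v₁ v₂ v₃ := by
  have key : ∀ {v : Fin m → Fin 3} {a : Fin m}, Supp v = Finset.univ.erase a →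
      ∀ c, v c = 0 ↔ c = a := by
    intro v a h c
    have hc := congrArg (c ∈ ·) h
    simpa [Supp, not_iff_not] using hc
  have k₁ := key h₁
  have k₂ := key h₂
  have k₃ := key h₃
  constructor
  · rintro ⟨c, h⟩
    simp only [ExactlyOneNonzero, k₁, k₂, k₃, ne_eq] at h
    grind
  · rintro ⟨c, h12, h13, h23⟩
    have hc : c ≠ i ∧ c ≠ j ∧ c ≠ k := by
      refine ⟨?_, ?_, ?_⟩ <;> rintro rfl <;> contradiction
    have n₁ := (k₁ c).not.2 hc.1
    have n₂ := (k₂ c).not.2 hc.2.1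
    have n₃ := (k₃ c).not.2 hc.2.2
    -- Three nonzero elements of `Fin 3` cannot be pairwise distinct.
    omega

lemma nonzeroValues_of_supp {v : Fin 5 → Fin 3} {i : Fin 5} (h : Supp v = Finset.univ.erase i) :
    nonzeroValues v = List.ofFn fun r : Fin 4 => v (i.succAbove r) := by
  have hs : (Finset.univ.erase i).sort (· ≤ ·) = List.ofFn i.succAbove := by
    have he : Finset.univ.erase i = (List.ofFn i.succAbove).toFinset := by
      clear h
      revert i
      decide
    rw [he, List.toFinset_sort _ (List.nodup_ofFn.2 i.succAbove_right_injective)]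
    exact i.strictMono_succAbove.sortedLT_ofFn.pairwise.imp le_of_lt
  rw [nonzeroValues, h, hs, List.map_ofFn]
  rfl

/-- A typed clash between three distinct supports of size `w` excludes a monotype admissible
`I(m,w)` set. -/
lemma not_exists_of_typedClash {m w : ℕ} {t : List (Fin 3)} {S₁ S₂ S₃ : Finset (Fin m)}
    (h : TypedClash t S₁ S₂ S₃) (c₁ : S₁.card = w) (c₂ : S₂.card = w) (c₃ : S₃.card = w)
    (h12 : S₁ ≠ S₂) (h13 : S₁ ≠ S₃) (h23 : S₂ ≠ S₃) :
    ¬ ∃ A : Set (Fin m → Fin 3), IsISet m w A ∧ IsAdmissible A ∧ ∀ v ∈ A, IsOfType v t := by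
  rintro ⟨A, hI, hA, ht⟩
  obtain ⟨v₁, ⟨m₁, rfl⟩, -⟩ := hI.1 S₁ c₁
  obtain ⟨v₂, ⟨m₂, rfl⟩, -⟩ := hI.1 S₂ c₂
  obtain ⟨v₃, ⟨m₃, rfl⟩, -⟩ := hI.1 S₃ c₃
  exact hA.2 v₁ m₁ v₂ m₂ v₃ m₃ (mt (congrArg Supp) h12) (mt (congrArg Supp) h13)
    (mt (congrArg Supp) h23) (h v₁ v₂ v₃ rfl rfl rfl (ht _ m₁) (ht _ m₂) (ht _ m₃))

/-- The type `t` prescribes the value `x` at position `b` for vectors in `{0,1,2}^5` vanishing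
exactly at `a`: `b` is the `r`-th element of the support `univ.erase a` (counting from zero), and
the entry of `t` of index `r` exists and equals `x`. -/
abbrev Forces (t : List (Fin 3)) (a b : Fin 5) (x : Fin 3) : Prop :=
  ∃ r : Fin 4, a.succAbove r = b ∧ t[(r : ℕ)]? = some x

lemma Forces.apply_eq {t : List (Fin 3)} {a b : Fin 5} {x : Fin 3} (hf : Forces t a b x)
    {v : Fin 5 → Fin 3} (h : Supp v = Finset.univ.erase a) (ht : IsOfType v t) : v b = x := by
  obtain ⟨r, rfl, hr⟩ := hf
  rw [IsOfType, nonzeroValues_of_supp h] at ht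
  obtain ⟨hlt, rfl⟩ := List.getElem?_eq_some_iff.1 hr
  rw [ht.getElem hlt, List.getElem_ofFn]

/-- If `t` forces agreement at each of three omitted coordinates `i`, `j`, `k`, then the supports
`univ.erase i`, `univ.erase j`, `univ.erase k` form a type `t` clash, which excludes a monotype
admissible `I(5,4)` set. -/
lemma not_exists_of_forces {t : List (Fin 3)} (i j k : Fin 5)
    (hij : i ≠ j) (hik : i ≠ k) (hjk : j ≠ k)
    (hi : ∃ x, Forces t j i x ∧ Forces t k i x) (hj : ∃ x, Forces t i j x ∧ Forces t k j x)
    (hk : ∃ x, Forces t i k x ∧ Forces t j k x) :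
    ¬ ∃ A : Set (Fin 5 → Fin 3), IsISet 5 4 A ∧ IsAdmissible A ∧ ∀ v ∈ A, IsOfType v t := by
  obtain ⟨x, hji, hki⟩ := hi
  obtain ⟨y, hij', hkj⟩ := hj
  obtain ⟨z, hik', hjk'⟩ := hk
  have hne : ∀ {a b : Fin 5}, a ≠ b → Finset.univ.erase a ≠ Finset.univ.erase b := by decide
  refine not_exists_of_typedClash (S₁ := Finset.univ.erase i) (S₂ := Finset.univ.erase j)
    (S₃ := Finset.univ.erase k) ?_ (by simp) (by simp) (by simp) (hne hij) (hne hik) (hne hjk)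
  intro v₁ v₂ v₃ h₁ h₂ h₃ t₁ t₂ t₃
  exact clash3_of_eq hij hik hjk h₁ h₂ h₃
    ((hji.apply_eq h₂ t₂).trans (hki.apply_eq h₃ t₃).symm)
    ((hij'.apply_eq h₁ t₁).trans (hkj.apply_eq h₃ t₃).symm)
    ((hik'.apply_eq h₁ t₁).trans (hjk'.apply_eq h₂ t₂).symm)


/-- For every `t` in `{11, 1211, 122, 211, 2122, 22}`, there is no `I(5,4)` admissible set in
which every element is of type `t`. -/
theorem no_monotype_I54 (t : List (Fin 3))
    (ht : t ∈ ([[1, 1], [1, 2, 1, 1], [1, 2, 2], [2, 1, 1], [2, 1, 2, 2], [2, 2]] :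
        List (List (Fin 3)))) :
    ¬ ∃ A : Set (Fin 5 → Fin 3),
        IsISet 5 4 A ∧ IsAdmissible A ∧ ∀ v ∈ A, IsOfType v t := by
  simp only [List.mem_cons, List.not_mem_nil, or_false] at ht
  rcases ht with rfl | rfl | rfl | rfl | rfl | rfl
  · exact not_exists_of_forces 0 1 2 (by decide) (by decide) (by decide) (by decide) (by decide)
      (by decide)
  · exact not_exists_of_forces 0 3 4 (by decide) (by decide) (by decide) (by decide) (by decide)
      (by decide)
  · exact not_exists_of_forces 1 2 3 (by decide) (by decide) (by decide) (by decide) (by decide)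
      (by decide)
  · exact not_exists_of_forces 1 2 3 (by decide) (by decide) (by decide) (by decide) (by decide)
      (by decide)
  · exact not_exists_of_forces 0 3 4 (by decide) (by decide) (by decide) (by decide) (by decide)
      (by decide)
  · exact not_exists_of_forces 0 1 2 (by decide) (by decide) (by decide) (by decide) (by decide)
      (by decide)
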